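/- arXiv:0906.3700 — 6 statements merged into one kernel-verified Lean document; each statement's English description precedes it below -/
import Mathlib

section
/- For every f ∈ S(ℝ), the series Σ_{n ∈ ℤ} f(φ + θn)·exp(2πi n ψ) converges absolutely for every (φ, ψ) ∈ ℝ², the resulting function Φf : ℝ² → ℂ is infinitely differentiable, and it satisfies the quasi-periodicity relations Φf(φ + θ, ψ) = exp(−2πi ψ)·Φf(φ, ψ) and Φf(φ, ψ + 1) = Φf(φ, ψ) for all (φ, ψ) ∈ ℝ². -/
open Complex SchwartzMap

/-- The transform `Φf(φ, ψ) = Σ_{n ∈ ℤ} f(φ + θn) · exp(2πi n ψ)`. -/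
noncomputable def Phi (θ : ℝ) (f : SchwartzMap ℝ ℂ) : ℝ × ℝ → ℂ :=
  fun p => ∑' n : ℤ, f (p.1 + θ * n) * Complex.exp (2 * Real.pi * Complex.I * n * p.2)

lemma aux_mul {u v : ℝ × ℝ → ℂ} (hu : ContDiff ℝ (⊤ : ℕ∞) u) (hv : ContDiff ℝ (⊤ : ℕ∞) v)
    (k : ℕ) (x : ℝ × ℝ) (A B : ℝ)
    (hA : ∀ i ≤ k, ‖iteratedFDeriv ℝ i u x‖ ≤ A) (hB : ∀ i ≤ k, ‖iteratedFDeriv ℝ i v x‖ ≤ B) :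
    ∀ i ≤ k, ‖iteratedFDeriv ℝ i (fun y => u y * v y) x‖ ≤ 2 ^ k * (A * B) := by
  intro i hi
  have hA0 : 0 ≤ A := (norm_nonneg _).trans (hA 0 (Nat.zero_le _))
  have hB0 : 0 ≤ B := (norm_nonneg _).trans (hB 0 (Nat.zero_le _))
  refine (norm_iteratedFDeriv_mul_le hu hv x (n := i) (by exact_mod_cast le_top)).trans ?_
  calc _ ≤ ∑ j ∈ Finset.range (i + 1), (i.choose j : ℝ) * A * B := by
        apply Finset.sum_le_sum
        intro j hj
        have hj' : j ≤ i := by simpa [Nat.lt_succ_iff] using hj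
        gcongr
        · exact hA j (hj'.trans hi)
        · exact hB _ ((Nat.sub_le _ _).trans hi)
    _ = 2 ^ i * (A * B) := by
        rw [← Finset.sum_mul, ← Finset.sum_mul, mul_assoc]
        congr 1
        exact_mod_cast Nat.sum_range_choose i
    _ ≤ _ := by
        gcongr
        norm_num

lemma aux_comp (L : ℝ × ℝ →L[ℝ] ℝ) (hL : ‖L‖ ≤ 1) {h : ℝ → ℂ} (hh : ContDiff ℝ (⊤ : ℕ∞) h)
    (i : ℕ) (x : ℝ × ℝ) :
    ‖iteratedFDeriv ℝ i (fun y => h (L y)) x‖ ≤ ‖iteratedFDeriv ℝ i h (L x)‖ := by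
  have := L.iteratedFDeriv_comp_right hh x (i := i) (by exact_mod_cast le_top)
  change ‖iteratedFDeriv ℝ i (h ∘ L) x‖ ≤ _
  rw [this]
  refine (ContinuousMultilinearMap.norm_compContinuousLinearMap_le _ _).trans ?_
  apply mul_le_of_le_one_right (norm_nonneg _)
  exact Finset.prod_le_one (fun _ _ => norm_nonneg _) (fun _ _ => hL)

lemma aux_exp (c : ℂ) (k : ℕ) :
    iteratedDeriv k (fun t : ℝ => Complex.exp (c * t)) = fun t : ℝ => c ^ k * Complex.exp (c * t) := by
  induction k with
  | zero => simp
  | succ k ih =>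
    rw [iteratedDeriv_succ, ih]
    ext t
    have h1 : HasDerivAt (fun t : ℝ => c * (t : ℂ)) c t := by
      simpa using (Complex.ofRealCLM.hasDerivAt (x := t)).const_mul c
    rw [(h1.cexp.const_mul (c ^ k)).deriv]
    ring

lemma aux_schwartz (f : SchwartzMap ℝ ℂ) (N k : ℕ) :
    ∃ C : ℝ, 0 ≤ C ∧ ∀ i ≤ k, ∀ x : ℝ, ‖iteratedFDeriv ℝ i f x‖ ≤ C / (1 + |x|) ^ N := by
  refine ⟨2 ^ N * (Finset.Iic (N, k)).sup (fun m => SchwartzMap.seminorm ℝ m.1 m.2) f,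
    by positivity, ?_⟩
  intro i hi x
  rw [le_div_iff₀ (by positivity), mul_comm]
  exact SchwartzMap.one_add_le_sup_seminorm_apply (𝕜 := ℝ) (m := (N, k)) le_rfl hi f x

lemma aux_smooth_term (θ : ℝ) (f g : SchwartzMap ℝ ℂ) (n : ℤ) :
    ContDiff ℝ (⊤ : ℕ∞) (fun p : ℝ × ℝ => (f (p.1 + θ * n) * g p.1) *
      Complex.exp (2 * Real.pi * Complex.I * n * p.2)) := by
  have hf := f.smooth ⊤
  have hg := g.smooth ⊤
  have h3 : ContDiff ℝ (⊤ : ℕ∞) (fun p : ℝ × ℝ => ((p.2 : ℝ) : ℂ)) :=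
    Complex.ofRealCLM.contDiff.comp contDiff_snd
  fun_prop

lemma aux_bound (θ : ℝ) (hθ0 : 0 < θ) (hθ1 : θ ≤ 1) (f g : SchwartzMap ℝ ℂ) (k : ℕ) :
    ∃ C : ℝ, ∀ (n : ℤ) (x : ℝ × ℝ),
      ‖iteratedFDeriv ℝ k (fun p : ℝ × ℝ => (f (p.1 + θ * n) * g p.1) *
        Complex.exp (2 * Real.pi * Complex.I * n * p.2)) x‖ ≤ C * (1 / (1 + |(n : ℝ)|) ^ 2) := by
  obtain ⟨A, hA0, hA⟩ := aux_schwartz f (k + 2) k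
  obtain ⟨B, hB0, hB⟩ := aux_schwartz g (k + 2) k
  refine ⟨2 ^ k * (2 ^ k * (A * B) * (2 * Real.pi) ^ k) * (1 / θ) ^ (k + 2), ?_⟩
  intro n x
  have hf := f.smooth ⊤
  have hg := g.smooth ⊤
  have h3 : ContDiff ℝ (⊤ : ℕ∞) (fun t : ℝ => ((t : ℝ) : ℂ)) := Complex.ofRealCLM.contDiff
  have hu : ContDiff ℝ (⊤ : ℕ∞) (fun p : ℝ × ℝ => f (p.1 + θ * n)) := by fun_prop
  have hv : ContDiff ℝ (⊤ : ℕ∞) (fun p : ℝ × ℝ => g p.1) := by fun_prop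
  have he1 : ContDiff ℝ (⊤ : ℕ∞)
    (fun t : ℝ => Complex.exp (2 * Real.pi * Complex.I * n * t)) := by fun_prop
  have he : ContDiff ℝ (⊤ : ℕ∞)
    (fun p : ℝ × ℝ => Complex.exp (2 * Real.pi * Complex.I * n * p.2)) := he1.comp contDiff_snd
  have bu : ∀ i ≤ k, ‖iteratedFDeriv ℝ i (fun p : ℝ × ℝ => f (p.1 + θ * n)) x‖
      ≤ A / (1 + |x.1 + θ * n|) ^ (k + 2) := by
    intro i hi
    have := aux_comp (ContinuousLinearMap.fst ℝ ℝ ℝ) (ContinuousLinearMap.norm_fst_le ..)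
      (h := fun t => f (t + θ * n)) (by fun_prop) i x
    rw [iteratedFDeriv_comp_add_right] at this
    exact this.trans (hA i hi _)
  have bv : ∀ i ≤ k, ‖iteratedFDeriv ℝ i (fun p : ℝ × ℝ => g p.1) x‖
      ≤ B / (1 + |x.1|) ^ (k + 2) := by
    intro i hi
    have := aux_comp (ContinuousLinearMap.fst ℝ ℝ ℝ) (ContinuousLinearMap.norm_fst_le ..)
      (h := g) (by fun_prop) i x
    exact this.trans (hB i hi _)
  have be : ∀ i ≤ k, ‖iteratedFDeriv ℝ i
      (fun p : ℝ × ℝ => Complex.exp (2 * Real.pi * Complex.I * n * p.2)) x‖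
      ≤ (2 * Real.pi * (1 + |(n : ℝ)|)) ^ k := by
    intro i hi
    have := aux_comp (ContinuousLinearMap.snd ℝ ℝ ℝ) (ContinuousLinearMap.norm_snd_le ..)
      he1 i x
    refine this.trans ?_
    rw [norm_iteratedFDeriv_eq_norm_iteratedDeriv, aux_exp]
    have h1 : ‖Complex.exp (2 * Real.pi * Complex.I * n * (x.2 : ℝ))‖ = 1 := by
      rw [show 2 * Real.pi * Complex.I * n * (x.2 : ℂ)
        = ((2 * Real.pi * n * x.2 : ℝ) : ℂ) * Complex.I by push_cast; ring]
      exact Complex.norm_exp_ofReal_mul_I _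
    have h2 : ‖(2 * Real.pi * Complex.I * n : ℂ)‖ = 2 * Real.pi * |(n : ℝ)| := by
      simp [abs_of_pos Real.pi_pos]
    have h4 : (1 : ℝ) ≤ 2 * Real.pi * (1 + |(n : ℝ)|) := by
      nlinarith [Real.pi_gt_three, abs_nonneg (n : ℝ)]
    change ‖_ * Complex.exp (2 * Real.pi * Complex.I * n * (x.2 : ℝ))‖ ≤ _
    rw [norm_mul, h1, norm_pow, h2, mul_one]
    calc _ ≤ (2 * Real.pi * (1 + |(n : ℝ)|)) ^ i := by gcongr; linarith
      _ ≤ _ := pow_le_pow_right₀ h4 hi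
  refine (aux_mul (hu.mul hv) he k x _ _ (aux_mul hu hv k x _ _ bu bv) be k le_rfl).trans ?_
  have key : θ * (1 + |(n : ℝ)|) ≤ (1 + |x.1 + θ * n|) * (1 + |x.1|) := by
    have h1 : θ * |(n : ℝ)| ≤ |x.1 + θ * n| + |x.1| := by
      calc θ * |(n : ℝ)| = |(x.1 + θ * n) - x.1| := by
            rw [add_sub_cancel_left, abs_mul, abs_of_pos hθ0]
        _ ≤ _ := abs_sub _ _
    nlinarith [abs_nonneg (x.1 + θ * n), abs_nonneg x.1,
      mul_nonneg (abs_nonneg (x.1 + θ * n)) (abs_nonneg x.1)]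
  have hn : 0 < 1 + |(n : ℝ)| := by positivity
  calc _ = 2 ^ k * (2 ^ k * (A * B) * (2 * Real.pi) ^ k) * ((1 + |(n : ℝ)|) ^ k *
          (1 / ((1 + |x.1 + θ * n|) * (1 + |x.1|)) ^ (k + 2))) := by
        rw [mul_pow (2 * Real.pi), mul_pow (1 + |x.1 + θ * n|)]
        field_simp
    _ ≤ 2 ^ k * (2 ^ k * (A * B) * (2 * Real.pi) ^ k) * ((1 + |(n : ℝ)|) ^ k *
          (1 / (θ * (1 + |(n : ℝ)|)) ^ (k + 2))) := by
        have := Real.pi_pos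
        gcongr
    _ = _ := by
        rw [mul_pow θ, pow_add (1 + |(n : ℝ)|), one_div_pow]
        field_simp

lemma aux_summable : Summable (fun n : ℤ => 1 / (1 + |(n : ℝ)|) ^ 2) := by
  have h : Summable (fun n : ℤ => 1 / (n : ℝ) ^ 2) := Real.summable_one_div_int_pow.2 (by norm_num)
  refine Summable.of_norm_bounded_eventually h ?_
  have : ∀ᶠ n : ℤ in Filter.cofinite, n ≠ 0 := by
    exact (Set.finite_singleton (0 : ℤ)).eventually_cofinite_notMem
  filter_upwards [this] with n hn
  have hn' : (0 : ℝ) < |(n : ℝ)| := by positivity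
  rw [Real.norm_of_nonneg (by positivity), ← sq_abs (n : ℝ)]
  gcongr
  linarith

lemma aux_bump (a : ℝ) : ∃ g : SchwartzMap ℝ ℂ, ∀ᶠ x in nhds a, g x = 1 := by
  let b : ContDiffBump a := default
  have h1 : HasCompactSupport (fun x => ((b x : ℝ) : ℂ)) :=
    b.hasCompactSupport.comp_left (g := fun t : ℝ => (t : ℂ)) (by simp)
  have h2 : ContDiff ℝ (⊤ : ℕ∞) (fun x => ((b x : ℝ) : ℂ)) :=
    Complex.ofRealCLM.contDiff.comp b.contDiff
  refine ⟨h1.toSchwartzMap h2, ?_⟩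
  filter_upwards [b.eventuallyEq_one] with x hx
  change ((b x : ℝ) : ℂ) = 1
  rw [hx]; simp

theorem stmt1 (θ : ℝ) (hθ0 : 0 < θ) (hθ1 : θ ≤ 1) (f : SchwartzMap ℝ ℂ) :
    (∀ φ ψ : ℝ, Summable fun n : ℤ =>
        ‖f (φ + θ * n) * Complex.exp (2 * Real.pi * Complex.I * n * ψ)‖)
    ∧ ContDiff ℝ (⊤ : ℕ∞) (Phi θ f)
    ∧ (∀ φ ψ : ℝ, Phi θ f (φ + θ, ψ)
        = Complex.exp (-(2 * Real.pi * Complex.I * ψ)) * Phi θ f (φ, ψ))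
    ∧ (∀ φ ψ : ℝ, Phi θ f (φ, ψ + 1) = Phi θ f (φ, ψ)) := by
  refine ⟨?_, ?_, ?_, ?_⟩
  · intro φ ψ
    obtain ⟨g, hg⟩ := aux_bump φ
    obtain ⟨C, hC⟩ := aux_bound θ hθ0 hθ1 f g 0
    refine Summable.of_nonneg_of_le (fun _ => norm_nonneg _) (fun n => ?_)
      (aux_summable.mul_left C)
    have := hC n (φ, ψ)
    rw [norm_iteratedFDeriv_zero] at this
    simpa only [hg.self_of_nhds, mul_one] using this
  · rw [contDiff_iff_contDiffAt]
    intro p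
    obtain ⟨g, hg⟩ := aux_bump p.1
    choose C hC using aux_bound θ hθ0 hθ1 f g
    have := contDiff_tsum (𝕜 := ℝ) (N := ⊤) (v := fun k (n : ℤ) => C k * (1 / (1 + |(n : ℝ)|) ^ 2))
      (aux_smooth_term θ f g) (fun k _ => aux_summable.mul_left (C k)) (fun k n x _ => hC k n x)
    refine this.contDiffAt.congr_of_eventuallyEq ?_
    filter_upwards [continuous_fst.continuousAt.eventually hg] with q hq
    simp only [Phi, hq, mul_one]
  · intro φ ψ
    unfold Phi
    rw [← tsum_mul_left]
    rw [← (Equiv.addRight (1 : ℤ)).tsum_eq (fun n : ℤ => Complex.exp (-(2 * Real.pi * Complex.I * ψ))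
      * (f ((φ, ψ).1 + θ * n) * Complex.exp (2 * Real.pi * Complex.I * n * (φ, ψ).2)))]
    congr 1
    ext n
    simp only [Equiv.coe_addRight]
    rw [mul_left_comm, ← Complex.exp_add]
    push_cast
    congr 2
    · ring
    · ring
  · intro φ ψ
    unfold Phi
    congr 1
    ext n
    simp only
    congr 1
    rw [Complex.exp_eq_exp_iff_exists_int]
    exact ⟨n, by push_cast; ring⟩
end

section
/- For every f ∈ S(ℝ) and every x ∈ ℝ, one has the inversion formula ∫₀¹ Φf(θ·{x/θ}, ψ)·exp(−2πi ⌊x/θ⌋ ψ) dψ = f(x), where ⌊x/θ⌋ and {x/θ} denote the integer and fractional parts of x/θ. In particular, the linear map f ↦ Φf is injective on S(ℝ). -/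
open Complex SchwartzMap

lemma aux_congr {u v : ℤ → ℂ} {s : ℂ} (h : HasSum v s) (e : ∀ n, u n = v n) : HasSum u s := by
  rw [funext e]; exact h

lemma aux_summable_s2 (θ : ℝ) (hθ0 : 0 < θ) (f : SchwartzMap ℝ ℂ) (a : ℝ) :
    Summable (fun n : ℤ => ‖f (a + θ * n)‖) := by
  obtain ⟨C0, hC0⟩ := f.decay 0 0
  obtain ⟨C2, hC2⟩ := f.decay 2 0
  have h0 : ∀ y, ‖f y‖ ≤ C0 := fun y => by simpa using hC0.2 y
  have h2 : ∀ y, y ^ 2 * ‖f y‖ ≤ C2 := fun y => by simpa using hC2.2 y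
  have hs : Summable (fun n : ℤ => (2 * (C2 + a ^ 2 * C0) / θ ^ 2) * (1 / (n : ℝ) ^ 2)) :=
    (Real.summable_one_div_int_pow.mpr one_lt_two).mul_left _
  refine Summable.of_norm_bounded_eventually hs ?_
  have : ∀ᶠ n : ℤ in Filter.cofinite, n ≠ 0 := by
    rw [Filter.eventually_cofinite]; simp
  filter_upwards [this] with n hn
  have hn' : (0:ℝ) < (n : ℝ) ^ 2 := by positivity
  have hθ2 : 0 < θ ^ 2 := by positivity
  rw [norm_norm, mul_one_div, le_div_iff₀ hn', le_div_iff₀ hθ2]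
  have e1 := h2 (a + θ * n)
  have e2 := mul_le_mul_of_nonneg_left (h0 (a + θ * n)) (sq_nonneg a)
  have e3 : θ ^ 2 * (n : ℝ) ^ 2 ≤ 2 * ((a + θ * n) ^ 2 + a ^ 2) := by
    nlinarith [sq_nonneg (2 * a + θ * n)]
  have e4 := mul_le_mul_of_nonneg_right e3 (norm_nonneg (f (a + θ * n)))
  nlinarith

lemma aux_integral (k : ℤ) :
    (∫ ψ in (0:ℝ)..1, Complex.exp (2 * Real.pi * Complex.I * k * ψ)) = if k = 0 then 1 else 0 := by
  split_ifs with h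
  · simp [h]
  · have hc : (2 * Real.pi * Complex.I * k : ℂ) ≠ 0 := by
      have := Complex.two_pi_I_ne_zero
      exact mul_ne_zero this (by exact_mod_cast h)
    rw [integral_exp_mul_complex hc]
    have : Complex.exp (2 * Real.pi * Complex.I * k) = 1 := by
      rw [mul_comm]; exact Complex.exp_int_mul_two_pi_mul_I k
    simp [this]

lemma aux_norm (k : ℤ) (ψ : ℝ) : ‖Complex.exp (2 * Real.pi * Complex.I * k * ψ)‖ = 1 := by
  have : (2 * Real.pi * Complex.I * k * ψ : ℂ) = ((2 * Real.pi * k * ψ : ℝ) : ℂ) * Complex.I := by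
    push_cast; ring
  rw [this, Complex.norm_exp_ofReal_mul_I]

lemma aux_inv (θ : ℝ) (hθ0 : 0 < θ) (f : SchwartzMap ℝ ℂ) (a : ℝ) (m : ℤ) :
    (∫ ψ in (0:ℝ)..1, Phi θ f (a, ψ)
          * Complex.exp (-(2 * Real.pi * Complex.I * m * ψ))) = f (a + θ * m) := by
  have hsum := aux_summable_s2 θ hθ0 f a
  have key : HasSum (fun n : ℤ => ∫ ψ in (0:ℝ)..1,
      f (a + θ * n) * Complex.exp (2 * Real.pi * Complex.I * ((n - m : ℤ) : ℂ) * ψ))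
      (∫ ψ in (0:ℝ)..1, Phi θ f (a, ψ)
          * Complex.exp (-(2 * Real.pi * Complex.I * m * ψ))) := by
    refine intervalIntegral.hasSum_integral_of_dominated_convergence
      (fun n _ => ‖f (a + θ * n)‖) ?_ ?_ ?_ ?_ ?_
    · intro n
      exact Continuous.aestronglyMeasurable (by fun_prop)
    · intro n
      refine Filter.Eventually.of_forall fun ψ _ => ?_
      rw [norm_mul, aux_norm, mul_one]
    · exact Filter.Eventually.of_forall fun ψ _ => hsum
    · exact intervalIntegrable_const
    · refine Filter.Eventually.of_forall fun ψ _ => ?_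
      have h1 : Summable (fun n : ℤ =>
          f (a + θ * n) * Complex.exp (2 * Real.pi * Complex.I * n * ψ)) := by
        refine Summable.of_norm ?_
        simpa only [norm_mul, aux_norm, mul_one] using hsum
      have h2 := h1.hasSum.mul_right (Complex.exp (-(2 * Real.pi * Complex.I * m * ψ)))
      refine aux_congr h2 fun n => ?_
      rw [mul_assoc (f (a + θ * n)), ← Complex.exp_add]
      congr 2
      push_cast
      ring
  have key2 := hasSum_ite_eq m (f (a + θ * m))
  refine key.unique ?_
  refine aux_congr key2 fun n => ?_
  rw [intervalIntegral.integral_const_mul, aux_integral]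
  by_cases h : n = m
  · simp [h]
  · simp [h, sub_eq_zero]

theorem stmt2 (θ : ℝ) (hθ0 : 0 < θ) (hθ1 : θ ≤ 1) :
    (∀ f : SchwartzMap ℝ ℂ, ∀ x : ℝ,
      (∫ ψ in (0:ℝ)..1,
        Phi θ f (θ * Int.fract (x / θ), ψ)
          * Complex.exp (-(2 * Real.pi * Complex.I * (⌊x / θ⌋ : ℤ) * ψ))) = f x)
    ∧ Function.Injective (fun f : SchwartzMap ℝ ℂ => Phi θ f) := by
  have main : ∀ f : SchwartzMap ℝ ℂ, ∀ x : ℝ,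
      (∫ ψ in (0:ℝ)..1,
        Phi θ f (θ * Int.fract (x / θ), ψ)
          * Complex.exp (-(2 * Real.pi * Complex.I * (⌊x / θ⌋ : ℤ) * ψ))) = f x := by
    intro f x
    rw [aux_inv θ hθ0, ← mul_add, Int.fract_add_floor, mul_div_cancel₀ _ hθ0.ne']
  refine ⟨main, fun f g hfg => ?_⟩
  ext x
  have hfg' : Phi θ f = Phi θ g := hfg
  rw [← main f x, ← main g x, hfg']
end

section
/- The map f ↦ Φf is a ℂ-linear bijection from the Schwartz space S(ℝ) onto the space C^∞(𝕋², γ) = { g : ℝ² → ℂ smooth : g(φ + θ, ψ) = exp(−2πi ψ)·g(φ, ψ) and g(φ, ψ + 1) = g(φ, ψ) for all (φ, ψ) } of smooth sections of the line bundle γ over the torus; its inverse sends g to the function x ↦ ∫₀¹ g(θ·{x/θ}, ψ)·exp(−2πi ⌊x/θ⌋ ψ) dψ, where ⌊·⌋ and {·} denote the integer and fractional parts. -/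
open Complex SchwartzMap

/-- The space `C^∞(𝕋², γ)` of smooth sections of the line bundle `γ` over the torus,
realized as smooth functions on `ℝ²` with the quasi-periodicity conditions. -/
def SectionsGamma (θ : ℝ) : Set (ℝ × ℝ → ℂ) :=
  {g | ContDiff ℝ (⊤ : ℕ∞) g
    ∧ (∀ φ ψ : ℝ, g (φ + θ, ψ) = Complex.exp (-(2 * Real.pi * Complex.I * ψ)) * g (φ, ψ))
    ∧ (∀ φ ψ : ℝ, g (φ, ψ + 1) = g (φ, ψ))}


noncomputable def TT (θ : ℝ) (f : SchwartzMap ℝ ℂ) (k : ℕ) (n : ℤ) (p : ℝ × ℝ) : ℂ :=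
  (n : ℂ) ^ k * (f (p.1 + θ * n) * Complex.exp (2 * Real.pi * Complex.I * n * p.2))

lemma norm_e (n : ℤ) (t : ℝ) : ‖Complex.exp (2 * Real.pi * Complex.I * n * t)‖ = 1 := by
  have : (2 * Real.pi * Complex.I * n * t : ℂ) = ((2 * Real.pi * n * t : ℝ) : ℂ) * Complex.I := by
    push_cast; ring
  rw [this, Complex.norm_exp_ofReal_mul_I]

lemma TT_bound (θ : ℝ) (hθ0 : 0 < θ) (R : ℝ) (hR : 0 ≤ R) (f : SchwartzMap ℝ ℂ) (k : ℕ) :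
    ∃ u : ℤ → ℝ, Summable u ∧ ∀ n p, |p.1| ≤ R → ‖TT θ f k n p‖ ≤ u n := by
  obtain ⟨C, hC⟩ : ∃ C : ℝ, ∀ x : ℝ, (1 + |x|) ^ (k + 2) * ‖f x‖ ≤ C := by
    refine ⟨2 ^ (k+2) * (Finset.Iic (k+2, 0)).sup
      (fun m : ℕ × ℕ => SchwartzMap.seminorm ℝ m.1 m.2) f, fun x => ?_⟩
    simpa using SchwartzMap.one_add_le_sup_seminorm_apply (𝕜 := ℝ) (m := (k+2, 0))
      (k := k+2) (n := 0) le_rfl le_rfl f x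
  set M : ℝ := 1 + (1 + R) / θ with hM
  have hMpos : 0 < M := by positivity
  refine ⟨fun n => M ^ (k+2) * C * (1 / |(n : ℝ) + 1/2| ^ (2:ℝ)), ?_, ?_⟩
  · exact ((Real.summable_one_div_int_add_rpow (1/2) 2).2 (by norm_num)).mul_left _
  intro n p hp
  set y := p.1 + θ * n with hy
  have h1 : 1 + |(n:ℝ)| ≤ M * (1 + |y|) := by
    have h2 : θ * |(n:ℝ)| ≤ R + |y| := by
      have : θ * (n:ℝ) = y - p.1 := by rw [hy]; ring
      rw [show θ * |(n:ℝ)| = |θ * (n:ℝ)| by rw [abs_mul, abs_of_pos hθ0], this]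
      linarith [abs_sub y p.1]
    have h3 : |(n:ℝ)| ≤ (R + |y|) / θ := by rw [le_div_iff₀ hθ0]; linarith
    have h4 : (R + |y|) / θ ≤ (1 + R) / θ * (1 + |y|) := by
      rw [div_mul_eq_mul_div]; gcongr; nlinarith [abs_nonneg y]
    rw [hM]; nlinarith [abs_nonneg y]
  have hC' := hC y
  have hC0 : 0 ≤ C := le_trans (by positivity) hC'
  have hn : ‖TT θ f k n p‖ = |(n:ℝ)| ^ k * ‖f y‖ := by
    simp only [TT]
    rw [norm_mul, norm_mul, norm_e, mul_one, norm_pow]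
    simp [hy]
  rw [hn]
  have hpos : 0 < |(n:ℝ) + 1/2| := by
    rw [abs_pos]; intro h
    have h2 : (2 * n + 1 : ℝ) = 0 := by linarith
    have h3 : (2 * n + 1 : ℤ) = 0 := by exact_mod_cast h2
    omega
  have hle : |(n:ℝ) + 1/2| ≤ 1 + |(n:ℝ)| := by
    refine (abs_add_le _ _).trans ?_
    rw [abs_of_pos (by norm_num : (0:ℝ) < 1/2)]; linarith
  beta_reduce
  rw [Real.rpow_two, mul_one_div, le_div_iff₀ (by positivity)]
  calc |(n:ℝ)| ^ k * ‖f y‖ * |(n:ℝ) + 1/2| ^ 2 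
      ≤ (1 + |(n:ℝ)|) ^ k * ‖f y‖ * (1 + |(n:ℝ)|) ^ 2 := by gcongr; linarith
    _ = (1 + |(n:ℝ)|) ^ (k+2) * ‖f y‖ := by ring
    _ ≤ (M * (1 + |y|)) ^ (k+2) * ‖f y‖ := by gcongr
    _ = M ^ (k+2) * ((1 + |y|) ^ (k+2) * ‖f y‖) := by rw [mul_pow]; ring
    _ ≤ _ := by gcongr

lemma TT_summable (θ : ℝ) (hθ0 : 0 < θ) (f : SchwartzMap ℝ ℂ) (k : ℕ) (p : ℝ × ℝ) :
    Summable (fun n => TT θ f k n p) := by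
  obtain ⟨u, hu, h⟩ := TT_bound θ hθ0 |p.1| (abs_nonneg _) f k
  exact Summable.of_norm_bounded hu (fun n => h n p le_rfl)

noncomputable def AA : ℝ × ℝ →L[ℝ] ℂ := Complex.ofRealCLM.comp (ContinuousLinearMap.fst ℝ ℝ ℝ)
noncomputable def BB : ℝ × ℝ →L[ℝ] ℂ := Complex.ofRealCLM.comp (ContinuousLinearMap.snd ℝ ℝ ℝ)

lemma TT_deriv (θ : ℝ) (f : SchwartzMap ℝ ℂ) (k : ℕ) (n : ℤ) (p : ℝ × ℝ) :
    HasFDerivAt (TT θ f k n)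
      (TT θ (SchwartzMap.derivCLM ℝ ℂ f) k n p • AA
        + (2 * Real.pi * Complex.I * TT θ f (k+1) n p) • BB) p := by
  have h1 : HasFDerivAt (fun p : ℝ × ℝ => p.1 + θ * n) (ContinuousLinearMap.fst ℝ ℝ ℝ) p :=
    hasFDerivAt_fst.add_const _
  have h2 : HasDerivAt f (deriv f (p.1 + θ * n)) (p.1 + θ * n) :=
    f.differentiableAt.hasDerivAt
  have h3 := h2.hasFDerivAt.comp p h1
  have h4 : HasFDerivAt (fun p : ℝ × ℝ => (2 * Real.pi * Complex.I * n * p.2 : ℂ))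
      ((2 * Real.pi * Complex.I * n : ℂ) • BB) p := BB.hasFDerivAt.const_mul _
  have h5 := (h3.mul h4.cexp).const_mul ((n:ℂ)^k)
  refine h5.congr_fderiv ?_
  ext <;> simp [AA, BB, TT, SchwartzMap.derivCLM_apply] <;> ring_nf <;> simp

lemma TT_tsum_deriv (θ : ℝ) (hθ0 : 0 < θ) (f : SchwartzMap ℝ ℂ) (k : ℕ) (p : ℝ × ℝ) :
    HasFDerivAt (fun p => ∑' n, TT θ f k n p)
      ((∑' n, TT θ (SchwartzMap.derivCLM ℝ ℂ f) k n p) • AA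
        + (2 * Real.pi * Complex.I * ∑' n, TT θ f (k+1) n p) • BB) p := by
  obtain ⟨u, hu, h⟩ := TT_bound θ hθ0 (|p.1| + 1) (by positivity) (SchwartzMap.derivCLM ℝ ℂ f) k
  obtain ⟨v, hv, h'⟩ := TT_bound θ hθ0 (|p.1| + 1) (by positivity) f (k+1)
  have hs : ∀ q ∈ Metric.ball p 1, |q.1| ≤ |p.1| + 1 := by
    intro q hq
    have h1 : ‖q - p‖ < 1 := by simpa [dist_eq_norm] using hq
    have h2 := (norm_fst_le (q - p)).trans h1.le
    have h3 : |q.1 - p.1| ≤ 1 := by simpa using h2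
    have := abs_sub_abs_le_abs_sub q.1 p.1
    linarith
  have key := hasFDerivAt_tsum_of_isPreconnected (𝕜 := ℝ)
    (u := fun n => u n * ‖AA‖ + ‖(2 * Real.pi * Complex.I : ℂ)‖ * v n * ‖BB‖)
    (f := TT θ f k) (s := Metric.ball p 1) (x₀ := p) (x := p)
    ((hu.mul_right _).add ((hv.mul_left _).mul_right _)) Metric.isOpen_ball
    (convex_ball p 1).isPreconnected (fun n q _ => TT_deriv θ f k n q)
    (fun n q hq => by
      refine (norm_add_le _ _).trans ?_
      rw [norm_smul, norm_smul, norm_mul (2 * Real.pi * Complex.I : ℂ)]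
      gcongr
      · exact h n q (hs q hq)
      · exact h' n q (hs q hq))
    (Metric.mem_ball_self one_pos) (TT_summable θ hθ0 f k p) (Metric.mem_ball_self one_pos)
  refine key.congr_fderiv ?_
  have s1 := (TT_summable θ hθ0 (SchwartzMap.derivCLM ℝ ℂ f) k p)
  have s2 := (TT_summable θ hθ0 f (k+1) p).mul_left (2 * Real.pi * Complex.I : ℂ)
  rw [← tsum_mul_left]
  exact ((s1.hasSum.smul_const AA).add (s2.hasSum.smul_const BB)).tsum_eq

lemma TT_contDiff (θ : ℝ) (hθ0 : 0 < θ) (m : ℕ) : ∀ (f : SchwartzMap ℝ ℂ) (k : ℕ),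
    ContDiff ℝ m (fun p => ∑' n, TT θ f k n p) := by
  induction m with
  | zero =>
    intro f k
    exact contDiff_zero.2 (continuous_iff_continuousAt.2
      fun p => (TT_tsum_deriv θ hθ0 f k p).continuousAt)
  | succ m ih =>
    intro f k
    push_cast
    refine contDiff_succ_iff_hasFDerivAt.2 ⟨_, ?_, TT_tsum_deriv θ hθ0 f k⟩
    exact ((ih _ _).smul contDiff_const).add ((contDiff_const.mul (ih _ _)).smul contDiff_const)

lemma Phi_eq (θ : ℝ) (f : SchwartzMap ℝ ℂ) : Phi θ f = fun p => ∑' n, TT θ f 0 n p := by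
  ext p; simp [Phi, TT]

lemma Phi_contDiff (θ : ℝ) (hθ0 : 0 < θ) (f : SchwartzMap ℝ ℂ) :
    ContDiff ℝ (⊤ : ℕ∞) (Phi θ f) := by
  rw [Phi_eq]
  exact contDiff_infty.2 fun m => TT_contDiff θ hθ0 m f 0

lemma Phi_summable (θ : ℝ) (hθ0 : 0 < θ) (f : SchwartzMap ℝ ℂ) (p : ℝ × ℝ) :
    Summable (fun n : ℤ => f (p.1 + θ * n) * Complex.exp (2 * Real.pi * Complex.I * n * p.2)) := by
  simpa [TT] using TT_summable θ hθ0 f 0 p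

lemma Phi_mem (θ : ℝ) (hθ0 : 0 < θ) (f : SchwartzMap ℝ ℂ) : Phi θ f ∈ SectionsGamma θ := by
  refine ⟨Phi_contDiff θ hθ0 f, ?_, ?_⟩
  · intro φ ψ
    simp only [Phi]
    rw [← tsum_mul_left, ← (Equiv.addRight (-1 : ℤ)).tsum_eq]
    refine tsum_congr fun n => ?_
    have e1 : φ + θ + θ * (((Equiv.addRight (-1 : ℤ)) n : ℤ) : ℝ) = φ + θ * n := by
      simp; ring
    rw [e1, mul_left_comm, ← Complex.exp_add]
    congr 2
    simp; ring
  · intro φ ψ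
    simp only [Phi]
    refine tsum_congr fun n => ?_
    congr 1
    rw [Complex.exp_eq_exp_iff_exists_int]
    exact ⟨n, by push_cast; ring⟩

lemma int_e (j : ℤ) : (∫ t in (0:ℝ)..1, Complex.exp (2 * Real.pi * Complex.I * j * t))
    = if j = 0 then 1 else 0 := by
  split_ifs with h
  · simp [h]
  · rw [integral_exp_mul_complex]
    · have : Complex.exp (2 * Real.pi * Complex.I * j * (1:ℝ)) = 1 := by
        rw [Complex.exp_eq_one_iff]; exact ⟨j, by push_cast; ring⟩
      rw [this]; simp
    · simp [h, Real.pi_ne_zero]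

lemma Phi_coeff (θ : ℝ) (hθ0 : 0 < θ) (f : SchwartzMap ℝ ℂ) (φ : ℝ) (m : ℤ) :
    (∫ ψ in (0:ℝ)..1, Phi θ f (φ, ψ) * Complex.exp (-(2 * Real.pi * Complex.I * m * ψ)))
      = f (φ + θ * m) := by
  have hsum := (Phi_summable θ hθ0 f (φ, 0)).norm
  have key := intervalIntegral.hasSum_integral_of_dominated_convergence
    (μ := MeasureTheory.volume) (a := 0) (b := 1)
    (F := fun (n : ℤ) (ψ : ℝ) => f (φ + θ * n) * Complex.exp (2 * Real.pi * Complex.I * n * ψ)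
      * Complex.exp (-(2 * Real.pi * Complex.I * m * ψ)))
    (f := fun ψ => Phi θ f (φ, ψ) * Complex.exp (-(2 * Real.pi * Complex.I * m * ψ)))
    (bound := fun n _ => ‖f (φ + θ * n)‖)
    (fun n => by
      apply Continuous.aestronglyMeasurable
      fun_prop)
    (fun n => by
      filter_upwards with t _
      have := norm_e (-m) t
      push_cast at this
      rw [norm_mul, norm_mul, norm_e,
        show -(2 * Real.pi * Complex.I * m * t : ℂ) = 2 * Real.pi * Complex.I * -m * t by ring, this]
      simp)
    (by
      filter_upwards with t _
      simpa using hsum)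
    (by simp)
    (by
      filter_upwards with t _
      exact (Phi_summable θ hθ0 f (φ, t)).hasSum.mul_right _)
  rw [← key.tsum_eq, tsum_eq_single m]
  · simp [mul_assoc, ← Complex.exp_add]
  · intro n hn
    have := int_e (n - m)
    rw [if_neg (sub_ne_zero.2 hn)] at this
    rw [← mul_zero (f (φ + θ * n)), ← this, ← intervalIntegral.integral_const_mul]
    congr 1; ext t
    rw [mul_assoc, ← Complex.exp_add]
    congr 2
    push_cast; ring

lemma Phi_inv (θ : ℝ) (hθ0 : 0 < θ) (f : SchwartzMap ℝ ℂ) (x : ℝ) :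
    f x = ∫ ψ in (0:ℝ)..1, Phi θ f (θ * Int.fract (x / θ), ψ)
            * Complex.exp (-(2 * Real.pi * Complex.I * (⌊x / θ⌋ : ℤ) * ψ)) := by
  rw [Phi_coeff θ hθ0]
  congr 1
  rw [← mul_add, Int.fract_add_floor]
  field_simp

noncomputable def dphi (g : ℝ × ℝ → ℂ) (p : ℝ × ℝ) : ℂ := fderiv ℝ g p (1, 0)
noncomputable def dpsi (g : ℝ × ℝ → ℂ) (p : ℝ × ℝ) : ℂ := fderiv ℝ g p (0, 1)
noncomputable def DD (θ : ℝ) (g : ℝ × ℝ → ℂ) (p : ℝ × ℝ) : ℂ :=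
  p.1 * g p + θ / (2 * Real.pi * Complex.I) * dpsi g p
noncomputable def II (g : ℝ × ℝ → ℂ) (x : ℝ) : ℂ := ∫ ψ in (0:ℝ)..1, g (x, ψ)

lemma contDiff_dir {g : ℝ × ℝ → ℂ} (hg : ContDiff ℝ (⊤ : ℕ∞) g) (v : ℝ × ℝ) :
    ContDiff ℝ (⊤ : ℕ∞) (fun p => fderiv ℝ g p v) :=
  (hg.fderiv_right (m := ((⊤ : ℕ∞) : WithTop ℕ∞)) (by simp)).clm_apply contDiff_const

lemma hasDeriv_phi {g : ℝ × ℝ → ℂ} (hg : ContDiff ℝ (⊤ : ℕ∞) g) (φ ψ : ℝ) :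
    HasDerivAt (fun t => g (t, ψ)) (dphi g (φ, ψ)) φ := by
  have h1 : HasFDerivAt g (fderiv ℝ g (φ, ψ)) (φ, ψ) :=
    (hg.differentiable (by simp) (φ, ψ)).hasFDerivAt
  exact h1.comp_hasDerivAt φ ((hasDerivAt_id φ).prodMk (hasDerivAt_const φ ψ))

lemma hasDeriv_psi {g : ℝ × ℝ → ℂ} (hg : ContDiff ℝ (⊤ : ℕ∞) g) (φ ψ : ℝ) :
    HasDerivAt (fun t => g (φ, t)) (dpsi g (φ, ψ)) ψ := by
  have h1 : HasFDerivAt g (fderiv ℝ g (φ, ψ)) (φ, ψ) :=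
    (hg.differentiable (by simp) (φ, ψ)).hasFDerivAt
  exact h1.comp_hasDerivAt ψ ((hasDerivAt_const ψ φ).prodMk (hasDerivAt_id ψ))

lemma dphi_mem {θ : ℝ} {g : ℝ × ℝ → ℂ} (hg : g ∈ SectionsGamma θ) : dphi g ∈ SectionsGamma θ := by
  obtain ⟨h1, h2, h3⟩ := hg
  refine ⟨contDiff_dir h1 _, fun φ ψ => ?_, fun φ ψ => ?_⟩
  · have a := (hasDeriv_phi h1 (φ + θ) ψ).comp_add_const φ θ
    simp only [h2] at a
    exact a.unique ((hasDeriv_phi h1 φ ψ).const_mul _)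
  · have a := hasDeriv_phi h1 φ (ψ + 1)
    simp only [h3] at a
    exact a.unique (hasDeriv_phi h1 φ ψ)

lemma DD_mem {θ : ℝ} {g : ℝ × ℝ → ℂ} (hg : g ∈ SectionsGamma θ) : DD θ g ∈ SectionsGamma θ := by
  obtain ⟨h1, h2, h3⟩ := hg
  refine ⟨?_, fun φ ψ => ?_, fun φ ψ => ?_⟩
  · exact ((Complex.ofRealCLM.contDiff.comp contDiff_fst).mul h1).add
      (contDiff_const.mul (contDiff_dir h1 _))
  · have a := hasDeriv_psi h1 (φ + θ) ψ
    simp only [h2] at a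
    have e : HasDerivAt (fun t : ℝ => -(2 * Real.pi * Complex.I * t : ℂ))
        (-(2 * Real.pi * Complex.I)) ψ := by
      have := ((Complex.ofRealCLM.hasDerivAt (x := ψ)).const_mul
        (-(2 * Real.pi * Complex.I) : ℂ))
      simpa using this
    have b := a.unique (e.cexp.mul (hasDeriv_psi h1 φ ψ))
    simp only [DD, b, h2]
    have : (Real.pi : ℂ) ≠ 0 := by exact_mod_cast Real.pi_ne_zero
    push_cast
    field_simp
    ring
  · have a := (hasDeriv_psi h1 φ (ψ + 1)).comp_add_const ψ 1
    simp only [h3] at a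
    have b := a.unique (hasDeriv_psi h1 φ ψ)
    simp only [DD, b, h3]

lemma II_DD {θ : ℝ} {g : ℝ × ℝ → ℂ} (hg : g ∈ SectionsGamma θ) (x : ℝ) :
    II (DD θ g) x = x * II g x := by
  obtain ⟨h1, h2, h3⟩ := hg
  have c1 : Continuous fun ψ : ℝ => g (x, ψ) := h1.continuous.comp (by fun_prop)
  have c2 : Continuous fun ψ : ℝ => dpsi g (x, ψ) :=
    (contDiff_dir h1 (0,1)).continuous.comp (f := fun ψ : ℝ => (x, ψ)) (by fun_prop)
  simp only [II, DD]
  rw [intervalIntegral.integral_add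
    (Continuous.intervalIntegrable (by fun_prop) _ _)
    (Continuous.intervalIntegrable (by fun_prop) _ _), intervalIntegral.integral_const_mul,
    intervalIntegral.integral_const_mul,
    intervalIntegral.integral_eq_sub_of_hasDerivAt (fun t _ => hasDeriv_psi h1 x t)
      (c2.intervalIntegrable _ _)]
  have := h3 x 0
  rw [zero_add] at this
  rw [this]; simp

lemma II_hasDeriv {θ : ℝ} {g : ℝ × ℝ → ℂ} (hg : g ∈ SectionsGamma θ) (x : ℝ) :
    HasDerivAt (II g) (II (dphi g) x) x := by
  have h1 := hg.1
  have c1 : ∀ x, Continuous fun ψ : ℝ => g (x, ψ) := fun x => h1.continuous.comp (by fun_prop)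
  have cd : Continuous (dphi g) := (contDiff_dir h1 (1,0)).continuous
  have c2 : ∀ x, Continuous fun ψ : ℝ => dphi g (x, ψ) := fun x => cd.comp (by fun_prop)
  obtain ⟨C, hC⟩ := ((isCompact_Icc (a := x - 1) (b := x + 1)).prod
    (isCompact_Icc (a := (0:ℝ)) (b := 1))).exists_bound_of_continuousOn cd.continuousOn
  exact (intervalIntegral.hasDerivAt_integral_of_dominated_loc_of_deriv_le
    (F := fun x ψ => g (x, ψ)) (F' := fun x ψ => dphi g (x, ψ)) (bound := fun _ => C)
    (Icc_mem_nhds (a := x - 1) (b := x + 1) (by linarith) (by linarith))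
    (Filter.Eventually.of_forall fun x => (c1 x).aestronglyMeasurable)
    ((c1 x).intervalIntegrable _ _) (c2 x).aestronglyMeasurable
    (Filter.Eventually.of_forall fun t ht y hy => hC (y, t) ⟨hy, by
      rw [Set.uIoc_of_le zero_le_one] at ht; exact ⟨ht.1.le, ht.2⟩⟩)
    (by simp)
    (Filter.Eventually.of_forall fun t _ y _ => hasDeriv_phi h1 y t)).2

lemma g_shift {θ : ℝ} {g : ℝ × ℝ → ℂ} (hg : g ∈ SectionsGamma θ) (φ ψ : ℝ) (n : ℤ) :
    g (φ + θ * n, ψ) = Complex.exp (-(2 * Real.pi * Complex.I * n * ψ)) * g (φ, ψ) := by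
  induction n with
  | zero => simp
  | succ i ih =>
    have := hg.2.1 (φ + θ * (i:ℤ)) ψ
    rw [ih, ← mul_assoc, ← Complex.exp_add] at this
    rw [show φ + θ * ((i + 1 : ℤ) : ℝ) = φ + θ * (i:ℤ) + θ by push_cast; ring, this]
    congr 2; push_cast; ring
  | pred i ih =>
    have := hg.2.1 (φ + θ * ((-i - 1 : ℤ) : ℝ)) ψ
    rw [show φ + θ * ((-i - 1 : ℤ) : ℝ) + θ = φ + θ * (-i:ℤ) by push_cast; ring, ih] at this
    have h2 := congrArg (fun z => Complex.exp (2 * Real.pi * Complex.I * ψ) * z) this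
    simp only [← mul_assoc, ← Complex.exp_add] at h2
    rw [add_neg_cancel, Complex.exp_zero, one_mul] at h2
    rw [← h2]
    congr 2; push_cast; ring

lemma II_bdd {θ : ℝ} (hθ0 : 0 < θ) {g : ℝ × ℝ → ℂ} (hg : g ∈ SectionsGamma θ) :
    ∃ C, ∀ x, ‖II g x‖ ≤ C := by
  obtain ⟨C, hC⟩ := ((isCompact_Icc (a := (0:ℝ)) (b := θ)).prod
    (isCompact_Icc (a := (0:ℝ)) (b := 1))).exists_bound_of_continuousOn hg.1.continuous.continuousOn
  refine ⟨C, fun x => ?_⟩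
  have := intervalIntegral.norm_integral_le_of_norm_le_const (a := (0:ℝ)) (b := 1)
    (f := fun ψ => g (x, ψ)) (C := C) (fun t ht => by
      rw [Set.uIoc_of_le zero_le_one] at ht
      have hx : x = θ * Int.fract (x / θ) + θ * ⌊x / θ⌋ := by
        rw [← mul_add, Int.fract_add_floor]; field_simp
      rw [hx, g_shift hg]
      have := norm_e (-⌊x / θ⌋) t
      push_cast at this
      rw [norm_mul, show -(2 * Real.pi * Complex.I * ⌊x / θ⌋ * t : ℂ)
        = 2 * Real.pi * Complex.I * -⌊x / θ⌋ * t by ring, this, one_mul]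
      refine hC _ ⟨⟨?_, ?_⟩, ht.1.le, ht.2⟩
      · exact mul_nonneg hθ0.le (Int.fract_nonneg _)
      · exact mul_le_of_le_one_right hθ0.le (Int.fract_lt_one _).le)
  simpa [II] using this

lemma II_decay {θ : ℝ} (hθ0 : 0 < θ) (k : ℕ) : ∀ {g : ℝ × ℝ → ℂ}, g ∈ SectionsGamma θ →
    ∃ C, ∀ x : ℝ, ‖x‖ ^ k * ‖II g x‖ ≤ C := by
  induction k with
  | zero => intro g hg; simpa using II_bdd hθ0 hg
  | succ k ih =>
    intro g hg
    obtain ⟨C, hC⟩ := ih (DD_mem hg)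
    refine ⟨C, fun x => ?_⟩
    have := hC x
    rw [II_DD hg, norm_mul, Complex.norm_real] at this
    rw [pow_succ]; linarith

lemma II_iter {θ : ℝ} (n : ℕ) : ∀ {g : ℝ × ℝ → ℂ}, g ∈ SectionsGamma θ →
    ∃ h ∈ SectionsGamma θ, iteratedDeriv n (II g) = II h := by
  induction n with
  | zero => intro g hg; exact ⟨g, hg, iteratedDeriv_zero⟩
  | succ n ih =>
    intro g hg
    obtain ⟨h, hh, e⟩ := ih (dphi_mem hg)
    refine ⟨h, hh, ?_⟩
    rw [iteratedDeriv_succ', ← e]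
    congr 1
    ext x; exact (II_hasDeriv hg x).deriv

lemma II_contDiff {θ : ℝ} {g : ℝ × ℝ → ℂ} (hg : g ∈ SectionsGamma θ) :
    ContDiff ℝ (⊤ : ℕ∞) (II g) := by
  apply contDiff_of_differentiable_iteratedDeriv
  intro m _
  obtain ⟨h, hh, e⟩ := II_iter m hg
  rw [e]
  exact fun x => (II_hasDeriv hh x).differentiableAt

noncomputable def invF {θ : ℝ} (hθ0 : 0 < θ) {g : ℝ × ℝ → ℂ} (hg : g ∈ SectionsGamma θ) :
    SchwartzMap ℝ ℂ where
  toFun := II g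
  smooth' := II_contDiff hg
  decay' := by
    intro k n
    obtain ⟨h, hh, e⟩ := II_iter n hg
    obtain ⟨C, hC⟩ := II_decay hθ0 k hh
    refine ⟨C, fun x => ?_⟩
    rw [norm_iteratedFDeriv_eq_norm_iteratedDeriv, e]
    exact hC x

lemma Phi_invF {θ : ℝ} (hθ0 : 0 < θ) {g : ℝ × ℝ → ℂ} (hg : g ∈ SectionsGamma θ) :
    Phi θ (invF hθ0 hg) = g := by
  ext ⟨φ, ψ⟩
  haveI : Fact (0 < (1:ℝ)) := ⟨one_pos⟩
  have hper : Function.Periodic (fun t : ℝ => g (φ, t)) 1 := fun t => hg.2.2 φ t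
  have hc : Continuous fun t : ℝ => g (φ, t) := hg.1.continuous.comp (by fun_prop)
  let G : C(AddCircle (1:ℝ), ℂ) := ⟨hper.lift, by
    exact continuous_quot_lift _ hc⟩
  have hG : ∀ t : ℝ, G (t : AddCircle (1:ℝ)) = g (φ, t) := fun t => hper.lift_coe t
  have hcoef : ∀ n : ℤ, fourierCoeff G n = invF hθ0 hg (φ + θ * n) := by
    intro n
    rw [fourierCoeff_eq_intervalIntegral _ _ 0]
    simp only [one_div, inv_one, one_smul, zero_add]
    change _ = II g _
    simp only [II]
    congr 1; ext t
    rw [hG, g_shift hg, fourier_coe_apply, smul_eq_mul]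
    congr 2; push_cast; ring
  have hs : Summable (fourierCoeff G) := by
    have := (Phi_summable θ hθ0 (invF hθ0 hg) (φ, 0))
    simp only [Complex.ofReal_zero, mul_zero, Complex.exp_zero, mul_one] at this
    rw [show fourierCoeff G = _ from funext hcoef]
    exact this
  have := has_pointwise_sum_fourier_series_of_summable hs (ψ : AddCircle (1:ℝ))
  rw [hG] at this
  rw [← this.tsum_eq]
  simp only [Phi]
  refine tsum_congr fun n => ?_
  rw [hcoef, fourier_coe_apply, smul_eq_mul]
  congr 2; push_cast; ring

theorem stmt3 (θ : ℝ) (hθ0 : 0 < θ) (hθ1 : θ ≤ 1) :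
    (∀ f₁ f₂ : SchwartzMap ℝ ℂ, Phi θ (f₁ + f₂) = Phi θ f₁ + Phi θ f₂)
    ∧ (∀ (c : ℂ) (f : SchwartzMap ℝ ℂ), Phi θ (c • f) = c • Phi θ f)
    ∧ Set.BijOn (fun f : SchwartzMap ℝ ℂ => Phi θ f) Set.univ (SectionsGamma θ)
    ∧ (∀ g ∈ SectionsGamma θ, ∀ f : SchwartzMap ℝ ℂ, Phi θ f = g →
        ∀ x : ℝ, f x = ∫ ψ in (0:ℝ)..1,
          g (θ * Int.fract (x / θ), ψ)
            * Complex.exp (-(2 * Real.pi * Complex.I * (⌊x / θ⌋ : ℤ) * ψ))) := by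

  refine ⟨fun f₁ f₂ => ?_, fun c f => ?_, ⟨fun f _ => Phi_mem θ hθ0 f, ?_, ?_⟩, ?_⟩
  · ext p
    simp only [Phi, Pi.add_apply, SchwartzMap.add_apply, add_mul]
    exact (Phi_summable θ hθ0 f₁ p).tsum_add (Phi_summable θ hθ0 f₂ p)
  · ext p
    simp only [Phi, Pi.smul_apply, SchwartzMap.smul_apply, smul_eq_mul, mul_assoc]
    exact tsum_mul_left
  · intro f₁ _ f₂ _ h
    ext x
    have h' : Phi θ f₁ = Phi θ f₂ := h
    rw [Phi_inv θ hθ0 f₁, h', ← Phi_inv θ hθ0 f₂]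
  · intro g hg
    exact ⟨invF hθ0 hg, trivial, Phi_invF hθ0 hg⟩
  · rintro g _ f rfl x
    exact Phi_inv θ hθ0 f x
end

section
/- For every f ∈ S(ℝ) and every (φ, ψ) ∈ ℝ², one has Φ(f′)(φ, ψ) = (∂Φf/∂φ)(φ, ψ); that is, the map Φ intertwines the operator −i d/dx on S(ℝ) with the operator −i ∂/∂φ on functions on ℝ². -/
open Complex SchwartzMap

theorem Phi_bound_aux (θ : ℝ) (hθ0 : 0 < θ) (g : SchwartzMap ℝ ℂ) (φ : ℝ) :
    ∃ u : ℤ → ℝ, Summable u ∧ ∀ n : ℤ, ∀ y ∈ Metric.ball φ 1, ‖g (y + θ * n)‖ ≤ u n := by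
  obtain ⟨A, hA⟩ := g.decay 0 0
  obtain ⟨B, hB⟩ := g.decay 2 0
  have hA' : ∀ x, ‖g x‖ ≤ A := fun x => by simpa using hA.2 x
  have hB' : ∀ x : ℝ, x ^ 2 * ‖g x‖ ≤ B := fun x => by simpa using hB.2 x
  set K := |φ| + 1 with hK
  set C := 2 * B + 2 * K ^ 2 * A with hC
  refine ⟨fun n => C / θ ^ 2 * (1 / (n : ℝ) ^ 2) + (if n = 0 then A else 0), ?_, ?_⟩
  · apply Summable.add
    · exact (Real.summable_one_div_int_pow.mpr (by norm_num)).mul_left _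
    · exact (hasSum_ite_eq (0 : ℤ) A).summable
  · intro n y hy
    by_cases hn : n = 0
    · subst hn
      simpa using hA' y
    · have hn' : (n : ℝ) ≠ 0 := by exact_mod_cast hn
      have hp : 0 < θ ^ 2 * (n : ℝ) ^ 2 := by positivity
      simp only [hn, if_false, add_zero]
      rw [div_mul_div_comm, mul_one, le_div_iff₀ hp]
      have hyK : |y| ≤ K := by
        rw [Metric.mem_ball, Real.dist_eq] at hy
        have := abs_add_le (y - φ) φ
        rw [sub_add_cancel] at this
        linarith
      have hy2 : y ^ 2 ≤ K ^ 2 := sq_le_sq' (abs_le.mp hyK).1 (abs_le.mp hyK).2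
      have h1 : θ ^ 2 * (n : ℝ) ^ 2 ≤ 2 * (y + θ * n) ^ 2 + 2 * K ^ 2 := by
        nlinarith [sq_nonneg (y + θ * n + y)]
      have h2 := mul_le_mul_of_nonneg_left h1 (norm_nonneg (g (y + θ * n)))
      have h3 := mul_le_mul_of_nonneg_left (hA' (y + θ * n)) (sq_nonneg K)
      have h4 := hB' (y + θ * n)
      rw [hC]
      linarith

theorem Phi_exp_norm_aux (n : ℤ) (ψ : ℝ) :
    ‖Complex.exp (2 * Real.pi * Complex.I * n * ψ)‖ = 1 := by
  have : (2 * Real.pi * Complex.I * n * ψ : ℂ) = ((2 * Real.pi * n * ψ : ℝ) : ℂ) * Complex.I := by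
    push_cast; ring
  rw [this, Complex.norm_exp_ofReal_mul_I]

theorem stmt4 (θ : ℝ) (hθ0 : 0 < θ) (hθ1 : θ ≤ 1) (f f' : SchwartzMap ℝ ℂ)
    (hf' : ∀ x : ℝ, f' x = deriv (⇑f) x) :
    ∀ φ ψ : ℝ, Phi θ f' (φ, ψ) = deriv (fun t : ℝ => Phi θ f (t, ψ)) φ := by
  intro φ ψ
  obtain ⟨u, hu, hub⟩ := Phi_bound_aux θ hθ0 f' φ
  obtain ⟨v, hv, hvb⟩ := Phi_bound_aux θ hθ0 f φ
  have hφ : φ ∈ Metric.ball φ 1 := Metric.mem_ball_self one_pos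
  have key := hasDerivAt_tsum_of_isPreconnected
    (g := fun (n : ℤ) (t : ℝ) => f (t + θ * n) * Complex.exp (2 * Real.pi * Complex.I * n * ψ))
    (g' := fun (n : ℤ) (t : ℝ) => f' (t + θ * n) * Complex.exp (2 * Real.pi * Complex.I * n * ψ))
    hu Metric.isOpen_ball (convex_ball φ 1).isPreconnected ?_ ?_ hφ ?_ hφ
  · exact key.deriv.symm
  · intro n y _
    apply HasDerivAt.mul_const
    rw [hf']
    exact (f.differentiableAt.hasDerivAt (x := y + θ * n)).comp_add_const y (θ * n)
  · intro n y hy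
    rw [norm_mul, Phi_exp_norm_aux, mul_one]
    exact hub n y hy
  · refine Summable.of_norm_bounded hv fun n => ?_
    rw [norm_mul, Phi_exp_norm_aux, mul_one]
    exact hvb n φ hφ
end

section
/- Suppose f, g : ℝ → ℝ satisfy the Rieffel conditions: for all x ∈ ℝ, (i) g(x)·g(x+1) = 0, (ii) g(x)·(f(x) + f(x+1)) = g(x), (iii) f(x) − f(x)² = g(x)² + g(x−1)². Then the operator P defined by (P u)(x) = g(x−1)·u(x−1) + f(x)·u(x) + g(x)·u(x+1), acting on complex-valued functions on ℝ, is idempotent: P ∘ P = P. -/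
open Complex

/-- The Rieffel operator `P = U⁻¹g + f + gU`:
`(P u)(x) = g(x−1)·u(x−1) + f(x)·u(x) + g(x)·u(x+1)`. -/
noncomputable def rieffelOp (f g : ℝ → ℝ) : (ℝ → ℂ) → (ℝ → ℂ) :=
  fun u x => (g (x - 1) : ℂ) * u (x - 1) + (f x : ℂ) * u x + (g x : ℂ) * u (x + 1)

theorem stmt8 (f g : ℝ → ℝ)
    (h1 : ∀ x : ℝ, g x * g (x + 1) = 0)
    (h2 : ∀ x : ℝ, g x * (f x + f (x + 1)) = g x)
    (h3 : ∀ x : ℝ, f x - (f x) ^ 2 = (g x) ^ 2 + (g (x - 1)) ^ 2) :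
    rieffelOp f g ∘ rieffelOp f g = rieffelOp f g := by
  funext u x
  have e1 : (g (x-1-1) : ℂ) * g (x-1) = 0 := by
    have h := h1 (x-1-1)
    rw [sub_add_cancel] at h
    exact_mod_cast h
  have e2 : (g (x-1) : ℂ) * (f (x-1) + f x) = g (x-1) := by
    have h := h2 (x-1)
    rw [sub_add_cancel] at h
    exact_mod_cast h
  have e3 : (f x : ℂ) - (f x : ℂ)^2 = (g x : ℂ)^2 + (g (x-1) : ℂ)^2 := by
    exact_mod_cast h3 x
  have e4 : (g x : ℂ) * (f x + f (x+1)) = g x := by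
    exact_mod_cast h2 x
  have e5 : (g x : ℂ) * g (x+1) = 0 := by
    exact_mod_cast h1 x
  simp only [Function.comp_apply, rieffelOp, sub_add_cancel, add_sub_cancel_right]
  linear_combination u (x-1-1) * e1 + u (x-1) * e2 - u x * e3 + u (x+1) * e4 + u (x+1+1) * e5
end

section
/- Let θ be a real number with 0 < θ ≤ 1 such that 1/θ is not an integer. Then there exist infinitely differentiable θ-periodic functions f, g : ℝ → ℝ with 0 ≤ f ≤ 1 satisfying, for all x ∈ ℝ: (i) g(x)·g(x+1) = 0, (ii) g(x)·(f(x) + f(x+1)) = g(x), (iii) f(x) − f(x)² = g(x)² + g(x−1)², and moreover (1/θ)·∫₀^θ f(x) dx = {1/θ}, where {1/θ} denotes the fractional part of 1/θ. -/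
open Complex

noncomputable section RieffelAux

def rfA (δ y : ℝ) : ℝ := Real.pi / 2 * Real.smoothTransition (y / δ)
def rfS (δ y : ℝ) : ℝ := Real.sin (rfA δ (Int.fract y)) ^ 2
def rfB (δ y : ℝ) : ℝ := ⌊y⌋ + rfS δ y
def rfG (δ y : ℝ) : ℝ := Real.sin (rfA δ (Int.fract y)) * Real.cos (rfA δ (Int.fract y))
def rfF (δ ρ y : ℝ) : ℝ := rfB δ y - rfB δ (y - ρ)

lemma rfA_ge {δ y : ℝ} (hδ : 0 < δ) (h : δ ≤ y) : rfA δ y = Real.pi / 2 := by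
  unfold rfA
  rw [Real.smoothTransition.one_of_one_le ((one_le_div hδ).2 h), mul_one]

lemma rfA_le {δ y : ℝ} (hδ : 0 < δ) (h : y ≤ 0) : rfA δ y = 0 := by
  unfold rfA
  rw [Real.smoothTransition.zero_of_nonpos (div_nonpos_of_nonpos_of_nonneg h hδ.le), mul_zero]

lemma rfA_contDiff (δ : ℝ) : ContDiff ℝ (⊤ : ℕ∞) (rfA δ) := by
  unfold rfA
  exact contDiff_const.mul (Real.smoothTransition.contDiff.comp (contDiff_id.div_const δ))

lemma rf_local {δ : ℝ} (hδ : 0 < δ) (n : ℤ) (y : ℝ) (h1 : n - 1 + δ < y) (h2 : y < n + 1) :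
    rfB δ y = n + Real.sin (rfA δ (y - n)) ^ 2 ∧
    rfG δ y = Real.sin (rfA δ (y - n)) * Real.cos (rfA δ (y - n)) := by
  unfold rfB rfG rfS
  rcases le_or_gt (n : ℝ) y with h | h
  · have hf : ⌊y⌋ = n := Int.floor_eq_iff.2 ⟨h, h2⟩
    simp only [Int.fract, hf, and_self]
  · have hf : ⌊y⌋ = n - 1 := Int.floor_eq_iff.2 ⟨by push_cast; linarith, by push_cast; linarith⟩
    have e : Int.fract y = y - n + 1 := by
      rw [Int.fract, hf]; push_cast; ring
    rw [e, hf, rfA_ge hδ (by linarith : δ ≤ y - n + 1), rfA_le hδ (by linarith : y - n ≤ 0)]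
    simp

lemma rf_nhds {δ : ℝ} (hδ1 : δ < 1) (y : ℝ) :
    ∀ᶠ z in nhds y, (⌊y⌋ : ℝ) - 1 + δ < z ∧ z < ⌊y⌋ + 1 := by
  have h1 := Int.floor_le y
  have h2 := Int.lt_floor_add_one y
  exact (eventually_gt_nhds (by linarith)).and (eventually_lt_nhds h2)

lemma rfB_contDiff {δ : ℝ} (hδ : 0 < δ) (hδ1 : δ < 1) : ContDiff ℝ (⊤ : ℕ∞) (rfB δ) := by
  rw [contDiff_iff_contDiffAt]
  intro y
  have h : ContDiff ℝ (⊤ : ℕ∞) fun z : ℝ => (⌊y⌋ : ℝ) + Real.sin (rfA δ (z - ⌊y⌋)) ^ 2 :=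
    contDiff_const.add ((Real.contDiff_sin.comp
      ((rfA_contDiff δ).comp (contDiff_id.sub contDiff_const))).pow 2)
  refine h.contDiffAt.congr_of_eventuallyEq ?_
  filter_upwards [rf_nhds hδ1 y] with z hz
  exact (rf_local hδ _ z hz.1 hz.2).1

lemma rfG_contDiff {δ : ℝ} (hδ : 0 < δ) (hδ1 : δ < 1) : ContDiff ℝ (⊤ : ℕ∞) (rfG δ) := by
  rw [contDiff_iff_contDiffAt]
  intro y
  have ha : ContDiff ℝ (⊤ : ℕ∞) fun z : ℝ => rfA δ (z - ⌊y⌋) :=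
    (rfA_contDiff δ).comp (contDiff_id.sub contDiff_const)
  have h : ContDiff ℝ (⊤ : ℕ∞) fun z : ℝ =>
      Real.sin (rfA δ (z - ⌊y⌋)) * Real.cos (rfA δ (z - ⌊y⌋)) :=
    (Real.contDiff_sin.comp ha).mul (Real.contDiff_cos.comp ha)
  refine h.contDiffAt.congr_of_eventuallyEq ?_
  filter_upwards [rf_nhds hδ1 y] with z hz
  exact (rf_local hδ _ z hz.1 hz.2).2

lemma rfB_add (δ y : ℝ) (n : ℤ) : rfB δ (y + n) = rfB δ y + n := by
  simp [rfB, rfS]; ring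

lemma rfG_add (δ y : ℝ) (n : ℤ) : rfG δ (y + n) = rfG δ y := by
  simp [rfG]

lemma rfF_add (δ ρ y : ℝ) (n : ℤ) : rfF δ ρ (y + n) = rfF δ ρ y := by
  have : y + n - ρ = (y - ρ) + n := by ring
  simp only [rfF, this, rfB_add]; ring

lemma rfG_sq (δ y : ℝ) : rfG δ y ^ 2 = rfS δ y - rfS δ y ^ 2 := by
  have := Real.sin_sq_add_cos_sq (rfA δ (Int.fract y))
  have h : Real.cos (rfA δ (Int.fract y)) ^ 2 = 1 - Real.sin (rfA δ (Int.fract y)) ^ 2 := by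
    linarith
  unfold rfG rfS
  rw [mul_pow, h]; ring

lemma rfS_mem (δ y : ℝ) : 0 ≤ rfS δ y ∧ rfS δ y ≤ 1 := by
  unfold rfS
  exact ⟨sq_nonneg _, Real.sin_sq_le_one _⟩

lemma rf_key {δ ρ : ℝ} (hδ : 0 < δ) (h1 : δ ≤ ρ) (h2 : δ ≤ 1 - ρ) (y : ℝ) :
    (rfF δ ρ y = rfS δ y ∧ rfG δ (y - ρ) = 0) ∨
    (rfF δ ρ y = 1 - rfS δ (y - ρ) ∧ rfG δ y = 0) := by
  have f0 := Int.fract_nonneg y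
  have f1 := Int.fract_lt_one y
  have ff := Int.floor_add_fract y
  rcases lt_or_ge (Int.fract y) ρ with h | h
  · left
    have hf : ⌊y - ρ⌋ = ⌊y⌋ - 1 :=
      Int.floor_eq_iff.2 ⟨by push_cast; linarith, by push_cast; linarith⟩
    have e : Int.fract (y - ρ) = Int.fract y - ρ + 1 := by
      rw [Int.fract, hf]; push_cast; linarith
    have ea := rfA_ge hδ (by linarith : δ ≤ Int.fract y - ρ + 1)
    constructor
    · simp only [rfF, rfB]
      rw [hf]
      have : rfS δ (y - ρ) = 1 := by simp [rfS, e, ea]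
      rw [this]; push_cast; ring
    · simp [rfG, e, ea]
  · right
    have hf : ⌊y - ρ⌋ = ⌊y⌋ :=
      Int.floor_eq_iff.2 ⟨by linarith, by linarith⟩
    have ea := rfA_ge hδ (by linarith : δ ≤ Int.fract y)
    constructor
    · simp only [rfF, rfB]
      rw [hf]
      have : rfS δ y = 1 := by simp [rfS, ea]
      rw [this]; ring
    · simp [rfG, ea]

lemma rf_int {δ ρ : ℝ} (hδ : 0 < δ) (hδ1 : δ < 1) :
    ∫ y in (0:ℝ)..1, rfF δ ρ y = ρ := by
  have hc : Continuous (rfB δ) := (rfB_contDiff hδ hδ1).continuous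
  have hi : ∀ a b, IntervalIntegrable (rfB δ) MeasureTheory.volume a b :=
    fun a b => hc.intervalIntegrable a b
  have hc2 : Continuous fun y => rfB δ (y - ρ) := hc.comp (continuous_id.sub continuous_const)
  have e1 : ∫ y in (0:ℝ)..1, rfF δ ρ y
      = (∫ y in (0:ℝ)..1, rfB δ y) - ∫ y in (0 - ρ)..(1 - ρ), rfB δ y := by
    unfold rfF
    rw [intervalIntegral.integral_sub (hi _ _) (hc2.intervalIntegrable _ _),
      intervalIntegral.integral_comp_sub_right]
  have e2 := intervalIntegral.integral_add_adjacent_intervals (hi 0 (1 - ρ)) (hi (1 - ρ) 1)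
  have e3 := intervalIntegral.integral_add_adjacent_intervals (hi (0 - ρ) 0) (hi 0 (1 - ρ))
  have e4 : ∫ y in (1 - ρ)..1, rfB δ y = (∫ y in (0 - ρ)..0, rfB δ y) + ρ := by
    have h := intervalIntegral.integral_comp_add_right (a := 0 - ρ) (b := 0) (rfB δ) (1 : ℝ)
    have h' : ∀ y, rfB δ (y + 1) = rfB δ y + 1 := fun y => by
      have := rfB_add δ y 1
      simpa using this
    simp only [h'] at h
    rw [intervalIntegral.integral_add (hi _ _) (by simp)] at h
    rw [show 0 - ρ + 1 = 1 - ρ by ring, show (0:ℝ) + 1 = 1 by ring] at h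
    rw [← h]; simp
  linarith

end RieffelAux

theorem stmt10 (θ : ℝ) (hθ0 : 0 < θ) (hθ1 : θ ≤ 1)
    (hirr : ¬∃ n : ℤ, 1 / θ = (n : ℝ)) :
    ∃ f g : ℝ → ℝ,
      ContDiff ℝ (⊤ : ℕ∞) f ∧ ContDiff ℝ (⊤ : ℕ∞) g
      ∧ Function.Periodic f θ ∧ Function.Periodic g θ
      ∧ (∀ x : ℝ, 0 ≤ f x ∧ f x ≤ 1)
      ∧ (∀ x : ℝ, g x * g (x + 1) = 0)
      ∧ (∀ x : ℝ, g x * (f x + f (x + 1)) = g x)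
      ∧ (∀ x : ℝ, f x - (f x) ^ 2 = (g x) ^ 2 + (g (x - 1)) ^ 2)
      ∧ (1 / θ) * ∫ x in (0:ℝ)..θ, f x = Int.fract (1 / θ) := by
  obtain ⟨ρ, hρ⟩ : ∃ ρ, ρ = Int.fract (1 / θ) := ⟨_, rfl⟩
  have hρn : 1 / θ = ρ + (⌊1 / θ⌋ : ℤ) := by rw [hρ]; exact (Int.fract_add_floor _).symm
  rw [← hρ]
  have hρ1 : ρ < 1 := hρ ▸ Int.fract_lt_one _
  have hρ0 : 0 < ρ := by
    refine lt_of_le_of_ne (hρ ▸ Int.fract_nonneg _) fun h => hirr ⟨⌊1 / θ⌋, ?_⟩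
    rw [← h, zero_add] at hρn
    exact hρn
  generalize ⌊1 / θ⌋ = n at hρn
  obtain ⟨δ, hδ, h1, h2⟩ : ∃ δ : ℝ, 0 < δ ∧ δ ≤ ρ ∧ δ ≤ 1 - ρ :=
    ⟨min ρ (1 - ρ), lt_min hρ0 (by linarith), min_le_left _ _, min_le_right _ _⟩
  have hδ1 : δ < 1 := by linarith
  have hB := rfB_contDiff hδ hδ1
  have hG := rfG_contDiff hδ hδ1
  have hF : ContDiff ℝ (⊤ : ℕ∞) (rfF δ ρ) :=
    hB.sub (hB.comp (contDiff_id.sub contDiff_const))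
  have key := rf_key hδ h1 h2
  have ep : ∀ x, (x + θ) / θ = x / θ + (1 : ℤ) := fun x => by
    push_cast; field_simp
  have ea : ∀ x, (x + 1) / θ = (x / θ + ρ) + n := fun x => by
    rw [add_div, hρn]; ring
  have es : ∀ x, (x - 1) / θ = (x / θ - ρ) + (-n : ℤ) := fun x => by
    rw [sub_div, hρn]; push_cast; ring
  have key2 : ∀ y, rfF δ ρ (y + ρ) = rfS δ (y + ρ) ∧ rfG δ y = 0 ∨
      rfF δ ρ (y + ρ) = 1 - rfS δ y ∧ rfG δ (y + ρ) = 0 := fun y => by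
    have := key (y + ρ)
    rwa [add_sub_cancel_right] at this
  refine ⟨fun x => rfF δ ρ (x / θ), fun x => rfG δ (x / θ),
    hF.comp (contDiff_id.div_const θ), hG.comp (contDiff_id.div_const θ), ?_, ?_, ?_, ?_, ?_, ?_, ?_⟩
  · intro x
    simp only [ep, rfF_add]
  · intro x
    simp only [ep, rfG_add]
  · intro x
    have m1 := rfS_mem δ (x / θ)
    have m2 := rfS_mem δ (x / θ - ρ)
    rcases key (x / θ) with h | h
    · simp only [h.1]; exact m1
    · simp only [h.1]; constructor <;> linarith
  · intro x
    simp only [ea, rfG_add]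
    rcases key2 (x / θ) with h | h <;> simp [h.2]
  · intro x
    simp only [ea, rfF_add]
    rcases key2 (x / θ) with h | h
    · simp [h.2]
    · rcases key (x / θ) with h' | h'
      · rw [h.1, h'.1]; ring
      · simp [h'.2]
  · intro x
    simp only [es, rfG_add]
    rcases key (x / θ) with h | h
    · rw [h.1, h.2, rfG_sq]; ring
    · rw [h.1, h.2, rfG_sq]; ring
  · have := intervalIntegral.integral_comp_div (a := 0) (b := θ) (rfF δ ρ) hθ0.ne'
    simp only [this]
    rw [zero_div, div_self hθ0.ne', rf_int hδ hδ1, smul_eq_mul]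
    field_simp
end
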